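/- In the complexification of so(4,2), define the twelve Weyl generators K± = K₁ ± iK₂, J± = J₁ ± iJ₂, T± = T₁ ± iT₂, S± = S₁ ± iS₂, P± = P₁ ± iP₂, Q± = Q₁ ± iQ₂, where K₁ = ½(L₂₃+L₁₄), K₂ = ½(L₃₁+L₂₄), J₁ = ½(L₂₃−L₁₄), J₂ = ½(L₃₁−L₂₄), T₁ = ½(−L₁₅−L₂₆), T₂ = ½(L₂₅−L₁₆), S₁ = ½(−L₁₅+L₂₆), S₂ = ½(−L₂₅−L₁₆), P₁ = ½(−L₃₅−L₄₆), P₂ = ½(L₄₅−L₃₆), Q₁ = ½(L₃₅−L₄₆), Q₂ = ½(L₄₅+L₃₆). Then each of these twelve matrices is nonzero and is a simultaneous eigenvector of the commuting operators ad(L₁₂), ad(L₃₄), ad(L₅₆) (where ad(H)(E) = [H,E]), with eigenvalue triple (α₁,α₂,α₃) ∈ {−1,0,+1}³ having exactly two nonzero components; for each pair the triples of E₊ and E₋ are negatives of each other; the triples of K±, J± have third component 0, those of T±, S± have second component 0, and those of P±, Q± have first component 0; and the twelve resulting triples are pairwise distinct, so they exhaust all twelve vectors of {−1,0,+1}³ with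 exactly two nonzero entries. -/

import Mathlib

/-!
The twelve Weyl generators are linear combinations of the `L_{αβ}`, so everything about the
adjoint action follows from the commutation relations of `so(p,q)` in `genL_lie`:
`[L_{ab}, L_{cd}] = i (g_{bc} L_{ad} − g_{ac} L_{bd} − g_{bd} L_{ac} + g_{ad} L_{bc})`.
These follow by expanding each `L_{ab}` in matrix units (`genL_eq`). They show that the
Cartan generators commute, and that `ad(L₁₂)`, `ad(L₃₄)`, `ad(L₅₆)` act on each pair
`E± = E₁ ± i E₂` by `±` the integer triple recorded in `rootZ`. Nonvanishing is read off from a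
single matrix entry, and the statements about the twelve triples are a finite check over `ℤ`
transported to `ℂ` along the injective cast.
-/

open Matrix

/-- The diagonal matrix of the indefinite form of signature `(p, q)`. -/
noncomputable def gm (p q : ℕ) : Matrix (Fin (p + q)) (Fin (p + q)) ℝ :=
  Matrix.diagonal fun i => if (i : ℕ) < p then (1 : ℝ) else -1

/-- The generator `M_{αβ}` of `so(p,q)`, with entries
`(M_{αβ})_{μν} = δ_{αμ} g_{βν} − δ_{βμ} g_{αν}`. -/
noncomputable def genM (p q : ℕ) (a b : Fin (p + q)) :
    Matrix (Fin (p + q)) (Fin (p + q)) ℝ :=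
  Matrix.of fun μ ν => (if a = μ then gm p q b ν else 0) - (if b = μ then gm p q a ν else 0)

/-- The complexified generator `L_{αβ} = i · M_{αβ}`. -/
noncomputable def genL (p q : ℕ) (a b : Fin (p + q)) :
    Matrix (Fin (p + q)) (Fin (p + q)) ℂ :=
  Complex.I • (genM p q a b).map (fun r => (r : ℂ))

/-- The Cartan generators `L₁₂`, `L₃₄`, `L₅₆` (indices `0`-based). -/
noncomputable def cartanH : Fin 3 → Matrix (Fin 6) (Fin 6) ℂ :=
  ![genL 4 2 0 1, genL 4 2 2 3, genL 4 2 4 5]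

/-- The "1"-components of the six Yao pairs `K, J, T, S, P, Q` (indices `0`-based):
`K₁ = ½(L₂₃+L₁₄)`, `J₁ = ½(L₂₃−L₁₄)`, `T₁ = ½(−L₁₅−L₂₆)`, `S₁ = ½(−L₁₅+L₂₆)`,
`P₁ = ½(−L₃₅−L₄₆)`, `Q₁ = ½(L₃₅−L₄₆)`. -/
noncomputable def yao1 : Fin 6 → Matrix (Fin 6) (Fin 6) ℂ :=
  ![(1 / 2 : ℂ) • (genL 4 2 1 2 + genL 4 2 0 3),
    (1 / 2 : ℂ) • (genL 4 2 1 2 - genL 4 2 0 3),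
    (1 / 2 : ℂ) • (-genL 4 2 0 4 - genL 4 2 1 5),
    (1 / 2 : ℂ) • (-genL 4 2 0 4 + genL 4 2 1 5),
    (1 / 2 : ℂ) • (-genL 4 2 2 4 - genL 4 2 3 5),
    (1 / 2 : ℂ) • (genL 4 2 2 4 - genL 4 2 3 5)]

/-- The "2"-components of the six Yao pairs (indices `0`-based):
`K₂ = ½(L₃₁+L₂₄)`, `J₂ = ½(L₃₁−L₂₄)`, `T₂ = ½(L₂₅−L₁₆)`, `S₂ = ½(−L₂₅−L₁₆)`,
`P₂ = ½(L₄₅−L₃₆)`, `Q₂ = ½(L₄₅+L₃₆)`. -/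
noncomputable def yao2 : Fin 6 → Matrix (Fin 6) (Fin 6) ℂ :=
  ![(1 / 2 : ℂ) • (genL 4 2 2 0 + genL 4 2 1 3),
    (1 / 2 : ℂ) • (genL 4 2 2 0 - genL 4 2 1 3),
    (1 / 2 : ℂ) • (genL 4 2 1 4 - genL 4 2 0 5),
    (1 / 2 : ℂ) • (-genL 4 2 1 4 - genL 4 2 0 5),
    (1 / 2 : ℂ) • (genL 4 2 3 4 - genL 4 2 2 5),
    (1 / 2 : ℂ) • (genL 4 2 3 4 + genL 4 2 2 5)]

/-- The raising Weyl generators `K₊, J₊, T₊, S₊, P₊, Q₊`. -/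
noncomputable def weylP (a : Fin 6) : Matrix (Fin 6) (Fin 6) ℂ :=
  yao1 a + Complex.I • yao2 a

/-- The lowering Weyl generators `K₋, J₋, T₋, S₋, P₋, Q₋`. -/
noncomputable def weylM (a : Fin 6) : Matrix (Fin 6) (Fin 6) ℂ :=
  yao1 a - Complex.I • yao2 a

/-- The diagonal entries of the form `g`, as complex numbers. -/
noncomputable def gC (p q : ℕ) (a : Fin (p + q)) : ℂ := if (a : ℕ) < p then 1 else -1

/-- The expansion of `L_{ab}` in matrix units. -/
lemma genL_eq (p q : ℕ) (a b : Fin (p + q)) :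
    genL p q a b = Complex.I •
      (gC p q b • Matrix.single a b (1 : ℂ) - gC p q a • Matrix.single b a (1 : ℂ)) := by
  ext μ ν
  simp only [genL, genM, gm, gC, Matrix.smul_apply, Matrix.map_apply, Matrix.of_apply,
    Matrix.sub_apply, Matrix.single_apply, Matrix.diagonal_apply, smul_eq_mul, ite_and]
  split_ifs <;> simp

lemma genL_swap (p q : ℕ) (a b : Fin (p + q)) : genL p q b a = -genL p q a b := by
  rw [genL_eq, genL_eq]; module

lemma genL_self (p q : ℕ) (a : Fin (p + q)) : genL p q a a = 0 := by
  rw [genL_eq]; module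

/-- The product of matrix units, with the Kronecker delta as a scalar so that `module` applies. -/
lemma single_mul_single_ite {n : ℕ} (i j k l : Fin n) :
    Matrix.single i j (1 : ℂ) * Matrix.single k l (1 : ℂ) =
      (if j = k then (1 : ℂ) else 0) • Matrix.single i l (1 : ℂ) := by
  by_cases h : j = k
  · subst h; simp
  · simp [h]

/-- The commutation relations of `so(p,q)` in terms of the generators `L_{ab}`. -/
lemma genL_lie (p q : ℕ) (a b c d : Fin (p + q)) :
    ⁅genL p q a b, genL p q c d⁆ = Complex.I •
      ((if b = c then gC p q b else 0) • genL p q a d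
        - (if a = c then gC p q a else 0) • genL p q b d
        - (if b = d then gC p q b else 0) • genL p q a c
        + (if a = d then gC p q a else 0) • genL p q b c) := by
  simp only [genL_eq, Ring.lie_def, smul_mul_assoc, mul_smul_comm, sub_mul, mul_sub,
    single_mul_single_ite, eq_comm (a := c), eq_comm (a := d)]
  split_ifs <;> subst_vars <;> module

/-- The roots of `K₊, J₊, T₊, S₊, P₊, Q₊` with respect to `L₁₂, L₃₄, L₅₆`. -/
def rootZ : Fin 6 → Fin 3 → ℤ :=
  ![![-1, -1, 0], ![-1, 1, 0], ![1, 0, 1], ![-1, 0, 1], ![0, 1, 1], ![0, -1, 1]]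

lemma cartanH_comm (i j : Fin 3) : cartanH i * cartanH j = cartanH j * cartanH i := by
  have h : ⁅cartanH i, cartanH j⁆ = 0 := by
    fin_cases i <;> fin_cases j <;> simp [cartanH] <;> rw [genL_lie] <;> simp [genL_self]
  exact sub_eq_zero.mp h

/-- Each pair consists of simultaneous eigenvectors with opposite roots `± rootZ a`. -/
lemma lie_weyl (a : Fin 6) (i : Fin 3) :
    ⁅cartanH i, weylP a⁆ = (rootZ a i : ℂ) • weylP a ∧
      ⁅cartanH i, weylM a⁆ = (-(rootZ a i : ℂ)) • weylM a := by
  -- The generic lemmas speak of `Fin (4 + 2)`; restated over `Fin 6` they apply as rewrite rules.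
  have swap (a b : Fin 6) : genL 4 2 b a = -genL 4 2 a b := genL_swap 4 2 a b
  have lie (a b c d : Fin 6) : ⁅genL 4 2 a b, genL 4 2 c d⁆ = _ := genL_lie 4 2 a b c d
  have ladd (A B C : Matrix (Fin 6) (Fin 6) ℂ) : ⁅A, B + C⁆ = ⁅A, B⁆ + ⁅A, C⁆ := by
    simp only [Ring.lie_def]; noncomm_ring
  have lsub (A B C : Matrix (Fin 6) (Fin 6) ℂ) : ⁅A, B - C⁆ = ⁅A, B⁆ - ⁅A, C⁆ := by
    simp only [Ring.lie_def]; noncomm_ring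
  have lneg (A B : Matrix (Fin 6) (Fin 6) ℂ) : ⁅A, -B⁆ = -⁅A, B⁆ := by
    simp only [Ring.lie_def]; noncomm_ring
  have lsmul (z : ℂ) (A B : Matrix (Fin 6) (Fin 6) ℂ) : ⁅A, z • B⁆ = z • ⁅A, B⁆ := by
    simp [Ring.lie_def, smul_sub]
  have hI (z : ℂ) (A : Matrix (Fin 6) (Fin 6) ℂ) :
      Complex.I • z • Complex.I • A = -(z • A) := by
    rw [smul_comm z, smul_smul, Complex.I_mul_I, neg_one_smul]
  constructor <;> fin_cases a <;> fin_cases i <;>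
    simp [cartanH, weylP, weylM, yao1, yao2, rootZ, ladd, lsub, lneg, lsmul, lie, gC,
      smul_add, smul_sub, hI, swap 0 2, swap 1 3, swap 0 3, swap 1 2, swap 0 5, swap 1 4,
      swap 1 5, swap 0 4, swap 2 5, swap 3 4, swap 3 5, swap 2 4] <;>
    module

lemma weyl_ne_zero (a : Fin 6) : weylP a ≠ 0 ∧ weylM a ≠ 0 := by
  -- `(r a, c a)` is a position where both members of the pair have a nonzero entry.
  let r : Fin 6 → Fin 6 := ![0, 0, 0, 0, 2, 2]
  let c : Fin 6 → Fin 6 := ![2, 2, 4, 4, 4, 4]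
  constructor <;> intro h <;> have h' := congrFun (congrFun h (r a)) (c a) <;> revert h' <;>
    fin_cases a <;>
    simp [r, c, weylP, weylM, yao1, yao2, genL, genM, gm, Matrix.diagonal_apply]

/-- The twelve Weyl generators of `so(4,2)` are nonzero simultaneous eigenvectors of the
commuting operators `ad(L₁₂)`, `ad(L₃₄)`, `ad(L₅₆)`, with root triples in `{−1,0,1}³` having
exactly two nonzero components; within each pair the roots of `E₊` and `E₋` are negatives of
each other; the `K, J` roots have vanishing third component, the `T, S` roots vanishing
second component, the `P, Q` roots vanishing first component; and the twelve root triples are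
pairwise distinct, hence exhaust all twelve vectors of `{−1,0,1}³` with exactly two nonzero
entries. -/
theorem weyl_generators_root_structure :
    (∀ i j : Fin 3, cartanH i * cartanH j = cartanH j * cartanH i) ∧
    ∃ α : Fin 6 → Fin 3 → ℂ,
      (∀ a : Fin 6, weylP a ≠ 0 ∧ weylM a ≠ 0) ∧
      (∀ (a : Fin 6) (i : Fin 3),
        ⁅cartanH i, weylP a⁆ = α a i • weylP a ∧
        ⁅cartanH i, weylM a⁆ = (-(α a i)) • weylM a) ∧
      (∀ (a : Fin 6) (i : Fin 3), α a i = -1 ∨ α a i = 0 ∨ α a i = 1) ∧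
      (∀ a : Fin 6, ∃ i j : Fin 3, i ≠ j ∧ α a i ≠ 0 ∧ α a j ≠ 0 ∧
        ∀ k : Fin 3, k ≠ i → k ≠ j → α a k = 0) ∧
      (α 0 2 = 0 ∧ α 1 2 = 0 ∧ α 2 1 = 0 ∧ α 3 1 = 0 ∧ α 4 0 = 0 ∧ α 5 0 = 0) ∧
      Function.Injective (fun x : Fin 6 × Bool => cond x.2 (α x.1) (-(α x.1))) ∧
      (∀ v : Fin 3 → ℂ, (∀ i : Fin 3, v i = -1 ∨ v i = 0 ∨ v i = 1) →
        (∃ i j : Fin 3, i ≠ j ∧ v i ≠ 0 ∧ v j ≠ 0 ∧ ∀ k : Fin 3, k ≠ i → k ≠ j → v k = 0) →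
        ∃ x : Fin 6 × Bool, cond x.2 (α x.1) (-(α x.1)) = v) := by
  refine ⟨cartanH_comm, fun a i => (rootZ a i : ℂ), weyl_ne_zero, lie_weyl, ?_, ?_, ?_, ?_, ?_⟩
  · intro a i
    have h : ∀ a i, rootZ a i = -1 ∨ rootZ a i = 0 ∨ rootZ a i = 1 := by decide
    rcases h a i with h | h | h <;> simp [h]
  · intro a
    have h : ∀ a, ∃ i j : Fin 3, i ≠ j ∧ rootZ a i ≠ 0 ∧ rootZ a j ≠ 0 ∧
        ∀ k : Fin 3, k ≠ i → k ≠ j → rootZ a k = 0 := by decide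
    simpa only [ne_eq, Int.cast_eq_zero] using h a
  · simp [rootZ]
  · have h : Function.Injective
        (fun x : Fin 6 × Bool => cond x.2 (rootZ x.1) (-(rootZ x.1))) := by decide
    intro x y hxy
    refine h (funext fun i => ?_)
    have hi := congrFun hxy i
    obtain ⟨a, _ | _⟩ := x <;> obtain ⟨b, _ | _⟩ := y <;>
      simp only [cond_true, cond_false, Pi.neg_apply] at hi ⊢ <;> exact_mod_cast hi
  · intro v hv hsupp
    -- `v` is the cast of an integer vector, which lies in the finite set of sign vectors.
    have hs : ∀ i, ∃ s : SignType, v i = ((s : ℤ) : ℂ) := by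
      intro i
      rcases hv i with h | h | h
      · exact ⟨-1, by simp [h]⟩
      · exact ⟨0, by simp [h]⟩
      · exact ⟨1, by simp [h]⟩
    choose s hs using hs
    have key : ∀ s0 s1 s2 : SignType,
        (∃ i j : Fin 3, i ≠ j ∧ ![s0, s1, s2] i ≠ 0 ∧ ![s0, s1, s2] j ≠ 0 ∧
          ∀ k : Fin 3, k ≠ i → k ≠ j → ![s0, s1, s2] k = 0) →
        ∃ x : Fin 6 × Bool, ∀ i,
          cond x.2 (rootZ x.1) (-(rootZ x.1)) i = ((![s0, s1, s2] i : SignType) : ℤ) := by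
      decide
    have hs3 : ![s 0, s 1, s 2] = s := by
      ext i; fin_cases i <;> rfl
    have hz : ∀ i, v i = 0 ↔ s i = 0 := by
      intro i
      rw [hs i]
      cases s i <;> simp
    specialize key (s 0) (s 1) (s 2)
    rw [hs3] at key
    obtain ⟨⟨a, b⟩, hx⟩ := key (by simpa only [ne_eq, hz] using hsupp)
    refine ⟨(a, b), funext fun i => ?_⟩
    rw [hs i, ← hx i]
    cases b <;> simp
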